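/- arXiv:2306.03700 — 8 statements merged into one kernel-verified Lean document; each statement's English description precedes it below -/
import Mathlib

section
/- Let n ≥ 1, let A, B be n×n complex matrices, and let ε > 0. Then the ε-pseudospectrum Λ_ε(A,B) is a bounded subset of ℂ if and only if ε < σ_min(B). -/
/-!
Write `σ = sigmaMin B`. If `ε < σ` and `(A + ΔA) u = z (B + ΔB) u`, comparing norms gives
`|z| (σ - ε) ‖u‖ ≤ (‖A‖ + ε) ‖u‖`, which bounds `|z|` (`norm_le_of_mem_pseudoSpec`).

Conversely, let `σ ≤ ε`. By compactness of the unit sphere there is a unit vector `u` with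
`‖B u‖ ≤ ε`. For real `z = ± t`, with the sign chosen so that the cross term of
`‖A u - z B u‖²` is nonpositive, `‖A u - z B u‖² ≤ ‖A u‖² + t² ε² ≤ (ε (1 + t))²` as soon as
`t` is large. A residual of size at most `ε (1 + |z|)` can be cancelled by rank-one perturbations
of `A` and `B` of norm at most `ε` (`mem_pseudoSpec_of_residual`), so arbitrarily large `z`
belong to the pseudospectrum.
-/

/-- The spectral norm of a complex matrix: the operator norm induced by the
Euclidean norm on `ℂⁿ`. -/
noncomputable def specNorm {n : ℕ} (M : Matrix (Fin n) (Fin n) ℂ) : ℝ :=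
  ‖LinearMap.toContinuousLinearMap (Matrix.toEuclideanLin M)‖

/-- The Euclidean norm of a vector in `ℂⁿ`. -/
noncomputable def vecNorm {n : ℕ} (v : Fin n → ℂ) : ℝ :=
  Real.sqrt (∑ i, ‖v i‖ ^ 2)

/-- The `ε`-pseudospectrum of the matrix pencil `(A, B)`. -/
def pseudoSpec {n : ℕ} (ε : ℝ) (A B : Matrix (Fin n) (Fin n) ℂ) : Set ℂ :=
  {z | ∃ ΔA ΔB : Matrix (Fin n) (Fin n) ℂ,
    specNorm ΔA ≤ ε ∧ specNorm ΔB ≤ ε ∧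
    ∃ u : Fin n → ℂ, u ≠ 0 ∧ (A + ΔA).mulVec u = z • (B + ΔB).mulVec u}

/-- The smallest singular value of a complex matrix:
`σ_min(M) = inf {‖Mu‖ : ‖u‖ = 1}`. -/
noncomputable def sigmaMin {n : ℕ} (M : Matrix (Fin n) (Fin n) ℂ) : ℝ :=
  sInf {r | ∃ v : Fin n → ℂ, vecNorm v = 1 ∧ r = vecNorm (M.mulVec v)}

/-- The operator on Euclidean space given by a matrix; `specNorm` is its operator norm. -/
noncomputable abbrev matOp {n : ℕ} (M : Matrix (Fin n) (Fin n) ℂ) :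
    EuclideanSpace ℂ (Fin n) →L[ℂ] EuclideanSpace ℂ (Fin n) :=
  LinearMap.toContinuousLinearMap (Matrix.toEuclideanLin M)

lemma vecNorm_eq {n : ℕ} (v : Fin n → ℂ) : vecNorm v = ‖WithLp.toLp 2 v‖ := by
  rw [vecNorm, EuclideanSpace.norm_eq]

lemma matOp_toLp {n : ℕ} (M : Matrix (Fin n) (Fin n) ℂ) (v : Fin n → ℂ) :
    matOp M (WithLp.toLp 2 v) = WithLp.toLp 2 (M.mulVec v) := by
  simp [matOp]

lemma exists_matOp_eq {n : ℕ}
    (T : EuclideanSpace ℂ (Fin n) →L[ℂ] EuclideanSpace ℂ (Fin n)) :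
    ∃ M : Matrix (Fin n) (Fin n) ℂ, matOp M = T := by
  refine ⟨Matrix.toEuclideanLin.symm (T : _ →ₗ[ℂ] _), ?_⟩
  ext1 x
  simp [matOp]

lemma matOp_add {n : ℕ} (M N : Matrix (Fin n) (Fin n) ℂ) :
    matOp (M + N) = matOp M + matOp N := by
  simp [matOp]

lemma mem_pseudoSpec_iff {n : ℕ} (ε : ℝ) (A B : Matrix (Fin n) (Fin n) ℂ) (z : ℂ) :
    z ∈ pseudoSpec ε A B ↔
      ∃ S T : EuclideanSpace ℂ (Fin n) →L[ℂ] EuclideanSpace ℂ (Fin n), ‖S‖ ≤ ε ∧ ‖T‖ ≤ ε ∧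
        ∃ u : EuclideanSpace ℂ (Fin n), u ≠ 0 ∧
          matOp A u + S u = z • (matOp B u + T u) := by
  constructor
  · rintro ⟨M, N, hM, hN, u, hu, h⟩
    refine ⟨matOp M, matOp N, hM, hN, WithLp.toLp 2 u, by simpa using hu, ?_⟩
    rw [← add_apply, ← add_apply, ← matOp_add,
      ← matOp_add, matOp_toLp, matOp_toLp, h, WithLp.toLp_smul]
  · rintro ⟨S, T, hS, hT, u, hu, h⟩
    obtain ⟨M, rfl⟩ := exists_matOp_eq S
    obtain ⟨N, rfl⟩ := exists_matOp_eq T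
    obtain ⟨u, rfl⟩ := WithLp.toLp_surjective 2 u
    refine ⟨M, N, hS, hT, u, by simpa using hu, ?_⟩
    rw [← add_apply, ← add_apply, ← matOp_add,
      ← matOp_add, matOp_toLp, matOp_toLp, ← WithLp.toLp_smul] at h
    exact WithLp.toLp_injective 2 h

lemma sigmaMin_mul_norm_le {n : ℕ} (B : Matrix (Fin n) (Fin n) ℂ)
    (u : EuclideanSpace ℂ (Fin n)) : sigmaMin B * ‖u‖ ≤ ‖matOp B u‖ := by
  rcases eq_or_ne u 0 with rfl | hu
  · simp
  have hpos : 0 < ‖u‖ := norm_pos_iff.mpr hu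
  have key : sigmaMin B ≤ ‖matOp B (((‖u‖⁻¹ : ℝ) : ℂ) • u)‖ := by
    refine csInf_le ⟨0, ?_⟩ ⟨(((‖u‖⁻¹ : ℝ) : ℂ) • u).ofLp, ?_, ?_⟩
    · rintro r ⟨v, -, rfl⟩
      exact Real.sqrt_nonneg _
    · rw [vecNorm_eq, WithLp.toLp_ofLp, norm_smul, Complex.norm_real, norm_inv, norm_norm,
        inv_mul_cancel₀ hpos.ne']
    · rw [vecNorm_eq, ← matOp_toLp, WithLp.toLp_ofLp]
  rw [map_smul, norm_smul, Complex.norm_real, norm_inv, norm_norm, inv_mul_eq_div,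
    le_div_iff₀ hpos] at key
  exact key

/-- The infimum defining `sigmaMin` is attained, by compactness of the unit sphere. -/
lemma exists_norm_le_sigmaMin {n : ℕ} (hn : 1 ≤ n) (B : Matrix (Fin n) (Fin n) ℂ) :
    ∃ u : EuclideanSpace ℂ (Fin n), ‖u‖ = 1 ∧ ‖matOp B u‖ ≤ sigmaMin B := by
  have hne : (Metric.sphere (0 : EuclideanSpace ℂ (Fin n)) 1).Nonempty :=
    ⟨EuclideanSpace.single ⟨0, hn⟩ 1, by simp⟩
  obtain ⟨u, hu, hmin⟩ := (isCompact_sphere (0 : EuclideanSpace ℂ (Fin n)) 1).exists_isMinOn hne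
    (f := fun u => ‖matOp B u‖) (by fun_prop)
  have hu1 : ‖u‖ = 1 := by simpa using hu
  refine ⟨u, hu1, le_csInf ⟨_, u.ofLp, by rw [vecNorm_eq, WithLp.toLp_ofLp, hu1], rfl⟩ ?_⟩
  rintro r ⟨v, hv, rfl⟩
  rw [vecNorm_eq] at hv ⊢
  rw [← matOp_toLp]
  exact hmin (by simpa using hv)

lemma norm_le_of_mem_pseudoSpec {n : ℕ} {A B : Matrix (Fin n) (Fin n) ℂ} {ε : ℝ}
    (h : ε < sigmaMin B) {z : ℂ} (hz : z ∈ pseudoSpec ε A B) :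
    ‖z‖ ≤ (‖matOp A‖ + ε) / (sigmaMin B - ε) := by
  obtain ⟨S, T, hS, hT, u, hu, e⟩ := (mem_pseudoSpec_iff ε A B z).1 hz
  have hpos : 0 < ‖u‖ := norm_pos_iff.mpr hu
  rw [le_div_iff₀ (sub_pos.2 h)]
  refine le_of_mul_le_mul_right ?_ hpos
  have h1 : ‖matOp A u + S u‖ ≤ (‖matOp A‖ + ε) * ‖u‖ := by
    rw [add_mul]
    exact (norm_add_le _ _).trans (add_le_add ((matOp A).le_opNorm u) (S.le_of_opNorm_le hS u))
  have h2 : (sigmaMin B - ε) * ‖u‖ ≤ ‖matOp B u + T u‖ := by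
    have h3 := sigmaMin_mul_norm_le B u
    have h4 := T.le_of_opNorm_le hT u
    have h5 := norm_sub_le_norm_add (matOp B u) (T u)
    linarith
  calc ‖z‖ * (sigmaMin B - ε) * ‖u‖ = ‖z‖ * ((sigmaMin B - ε) * ‖u‖) := mul_assoc _ _ _
    _ ≤ ‖z‖ * ‖matOp B u + T u‖ := by gcongr
    _ = ‖matOp A u + S u‖ := by rw [e, norm_smul]
    _ ≤ _ := h1

/-- A unit vector with residual at most `ε (1 + |z|)` certifies membership in the pseudospectrum.
Only real `z = s t` with `s = ± 1` are needed; the residual is distributed over the rank-one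
perturbations of `A` and `B` in proportion `1 : t`. -/
lemma mem_pseudoSpec_of_residual {n : ℕ} {A B : Matrix (Fin n) (Fin n) ℂ} {ε s t : ℝ}
    (hs : s ^ 2 = 1) (ht : 0 ≤ t) {u : EuclideanSpace ℂ (Fin n)} (hu : ‖u‖ = 1)
    (h : ‖matOp A u - (s * t : ℂ) • matOp B u‖ ≤ ε * (1 + t)) :
    (s * t : ℂ) ∈ pseudoSpec ε A B := by
  set w := matOp A u - (s * t : ℂ) • matOp B u with hw
  have ht1 : (0 : ℝ) < 1 + t := by linarith
  have htc : (1 + t : ℂ) ≠ 0 := by exact_mod_cast ht1.ne'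
  have hsc : (s : ℂ) ^ 2 = 1 := by exact_mod_cast hs
  have hs' : ‖s‖ = 1 := by
    rcases eq_or_eq_neg_of_sq_eq_sq s 1 (by simpa using hs) with h | h <;> simp [h]
  have hR (c : ℝ) (hc : ‖c‖ = 1) :
      ‖((innerSL ℂ u).smulRight (((c / (1 + t) : ℝ) : ℂ) • w))‖ ≤ ε := by
    rw [ContinuousLinearMap.norm_smulRight_apply, innerSL_apply_norm, hu, one_mul, norm_smul,
      Complex.norm_real, norm_div, hc, Real.norm_of_nonneg ht1.le, one_div, inv_mul_le_iff₀ ht1]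
    linarith
  have huu : inner ℂ u u = 1 := by
    rw [inner_self_eq_norm_sq_to_K, hu]; simp
  refine (mem_pseudoSpec_iff ε A B _).2 ⟨_, _, hR (-1) (by simp), hR s hs', u, ?_, ?_⟩
  · rintro rfl
    simp at hu
  · have hA : matOp A u = w + (s * t : ℂ) • matOp B u := by rw [hw]; abel
    simp only [ContinuousLinearMap.smulRight_apply, innerSL_apply_apply, huu, one_smul]
    clear_value w
    rw [hA]
    push_cast
    match_scalars
    · field_simp
      linear_combination (-(t : ℂ)) * hsc
    · ring

theorem stmt3 {n : ℕ} (hn : 1 ≤ n) (A B : Matrix (Fin n) (Fin n) ℂ)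
    (ε : ℝ) (hε : 0 < ε) :
    Bornology.IsBounded (pseudoSpec ε A B) ↔ ε < sigmaMin B := by
  constructor
  · intro hb
    by_contra! hσ
    obtain ⟨u, hu, hBu⟩ := exists_norm_le_sigmaMin hn B
    replace hBu := hBu.trans hσ
    obtain ⟨C, hC⟩ := hb.exists_norm_le
    -- `2 ε² t ≥ ‖A u‖²` makes `‖A u‖² + t² ε² ≤ (ε (1 + t))²`; `t > C` contradicts boundedness.
    set t : ℝ := |C| + 1 + ‖matOp A u‖ ^ 2 / ε ^ 2 with ht
    have hq : 0 ≤ ‖matOp A u‖ ^ 2 / ε ^ 2 := by positivity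
    have ht0 : 0 ≤ t := by positivity
    have hCt : C < t := by linarith [le_abs_self C]
    have hAt : ‖matOp A u‖ ^ 2 ≤ ε ^ 2 * t := by
      have : ‖matOp A u‖ ^ 2 / ε ^ 2 ≤ t := by linarith [abs_nonneg C]
      rw [div_le_iff₀ (by positivity)] at this
      linarith
    obtain ⟨s, hs, hsign⟩ : ∃ s : ℝ, s ^ 2 = 1 ∧
        0 ≤ s * (inner ℂ (matOp A u) (matOp B u)).re := by
      rcases le_total 0 (inner ℂ (matOp A u) (matOp B u)).re with h | h
      · exact ⟨1, by norm_num, by linarith⟩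
      · exact ⟨-1, by norm_num, by linarith⟩
    have hs' : ‖s‖ = 1 := by
      rcases eq_or_eq_neg_of_sq_eq_sq s 1 (by simpa using hs) with h | h <;> simp [h]
    have hmem : (s * t : ℂ) ∈ pseudoSpec ε A B := by
      refine mem_pseudoSpec_of_residual hs ht0 hu ?_
      refine (sq_le_sq₀ (norm_nonneg _) (by positivity)).1 ?_
      have hst : ‖(s * t : ℂ)‖ = t := by
        rw [norm_mul, Complex.norm_real, Complex.norm_real, hs', one_mul, Real.norm_of_nonneg ht0]
      have hre : RCLike.re (inner ℂ (matOp A u) ((s * t : ℂ) • matOp B u)) =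
          t * (s * (inner ℂ (matOp A u) (matOp B u)).re) := by
        rw [inner_smul_right, ← Complex.ofReal_mul]
        simp only [RCLike.re_to_complex, Complex.re_ofReal_mul]
        ring
      rw [@norm_sub_sq ℂ, hre, norm_smul, hst]
      have h1 : 0 ≤ t * (s * (inner ℂ (matOp A u) (matOp B u)).re) := mul_nonneg ht0 hsign
      have h2 : (t * ‖matOp B u‖) ^ 2 ≤ (t * ε) ^ 2 := by gcongr
      nlinarith [mul_nonneg (sq_nonneg ε) ht0, sq_nonneg ε]
    have := hC _ hmem
    rw [norm_mul, Complex.norm_real, Complex.norm_real, hs', one_mul,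
      Real.norm_of_nonneg ht0] at this
    linarith
  · intro h
    exact isBounded_iff_forall_norm_le.2 ⟨_, fun z hz => norm_le_of_mem_pseudoSpec h hz⟩
end

section
/- Let n ≥ 1, let A, B be n×n complex matrices, and suppose 0 < ε < σ_min(B) (so B is invertible). Suppose B⁻¹A = V D V⁻¹ where V is an invertible n×n complex matrix and D is diagonal with diagonal entries λ₁, …, λₙ. Set κ(V) = ‖V‖₂‖V⁻¹‖₂ and r_ε = ε κ(V) ‖B⁻¹‖₂ (1 + (ε‖B⁻¹‖₂ + ‖B⁻¹A‖₂)/(1 − ε‖B⁻¹‖₂)). Then Λ_ε(A,B) is contained in the union over i of the closed balls of radius r_ε centered at λᵢ. -/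
lemma vecNorm_nonneg {n : ℕ} (v : Fin n → ℂ) : 0 ≤ vecNorm v := Real.sqrt_nonneg _

lemma vecNorm_pos {n : ℕ} {v : Fin n → ℂ} (hv : v ≠ 0) : 0 < vecNorm v := by
  rw [vecNorm_eq, norm_pos_iff]
  simpa using hv

lemma vecNorm_smul {n : ℕ} (c : ℂ) (v : Fin n → ℂ) : vecNorm (c • v) = ‖c‖ * vecNorm v := by
  rw [vecNorm_eq, vecNorm_eq, WithLp.toLp_smul, norm_smul]

lemma vecNorm_add_le {n : ℕ} (v w : Fin n → ℂ) : vecNorm (v + w) ≤ vecNorm v + vecNorm w := by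
  simp only [vecNorm_eq, WithLp.toLp_add]
  exact norm_add_le _ _

lemma vecNorm_sub_le {n : ℕ} (v w : Fin n → ℂ) : vecNorm (v - w) ≤ vecNorm v + vecNorm w := by
  simp only [vecNorm_eq, WithLp.toLp_sub]
  exact norm_sub_le _ _

lemma specNorm_nonneg {n : ℕ} (M : Matrix (Fin n) (Fin n) ℂ) : 0 ≤ specNorm M := norm_nonneg _

lemma vecNorm_mulVec_le {n : ℕ} (M : Matrix (Fin n) (Fin n) ℂ) (v : Fin n → ℂ) :
    vecNorm (M.mulVec v) ≤ specNorm M * vecNorm v := by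
  have h := (LinearMap.toContinuousLinearMap (Matrix.toEuclideanLin M)).le_opNorm (WithLp.toLp 2 v)
  rw [vecNorm_eq, vecNorm_eq]
  exact h

lemma specNorm_le {n : ℕ} (M : Matrix (Fin n) (Fin n) ℂ) {c : ℝ} (hc : 0 ≤ c)
    (h : ∀ v, vecNorm (M.mulVec v) ≤ c * vecNorm v) : specNorm M ≤ c := by
  refine ContinuousLinearMap.opNorm_le_bound _ hc fun x => ?_
  have h' := h x.ofLp
  rw [vecNorm_eq, vecNorm_eq] at h'
  exact h'

lemma sigmaMin_mul_le {n : ℕ} (M : Matrix (Fin n) (Fin n) ℂ) (v : Fin n → ℂ) :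
    sigmaMin M * vecNorm v ≤ vecNorm (M.mulVec v) := by
  by_cases hv : v = 0
  · subst hv
    simp [vecNorm]
  have hp := vecNorm_pos hv
  have hle : sigmaMin M ≤ vecNorm (M.mulVec (((vecNorm v)⁻¹ : ℂ) • v)) := by
    refine csInf_le ⟨0, ?_⟩ ⟨_, ?_, rfl⟩
    · rintro r ⟨w, -, rfl⟩
      exact vecNorm_nonneg _
    · rw [vecNorm_smul, norm_inv, Complex.norm_real, Real.norm_of_nonneg hp.le,
        inv_mul_cancel₀ hp.ne']
  rw [Matrix.mulVec_smul, vecNorm_smul, norm_inv, Complex.norm_real, Real.norm_of_nonneg hp.le,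
    inv_mul_eq_div, le_div_iff₀ hp] at hle
  exact hle

lemma isUnit_and_mul_specNorm_inv_lt_one {n : ℕ} (B : Matrix (Fin n) (Fin n) ℂ)
    {ε : ℝ} (hε : 0 < ε) (hεB : ε < sigmaMin B) :
    IsUnit B ∧ ε * specNorm B⁻¹ < 1 := by
  have hs : 0 < sigmaMin B := hε.trans hεB
  have hB : IsUnit B := by
    rw [← Matrix.mulVec_injective_iff_isUnit]
    intro x y hxy
    by_contra hne
    have h := sigmaMin_mul_le B (x - y)
    have h0 : B.mulVec (x - y) = 0 := by rw [Matrix.mulVec_sub, sub_eq_zero]; exact hxy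
    have h1 : vecNorm (0 : Fin n → ℂ) = 0 := by simp [vecNorm]
    rw [h0, h1] at h
    exact absurd h (not_le.2 (mul_pos hs (vecNorm_pos (sub_ne_zero.2 hne))))
  refine ⟨hB, ?_⟩
  have hle : specNorm B⁻¹ ≤ (sigmaMin B)⁻¹ := by
    refine specNorm_le _ (inv_nonneg.2 hs.le) fun v => ?_
    have h := sigmaMin_mul_le B (B⁻¹.mulVec v)
    rw [Matrix.mulVec_mulVec, Matrix.mul_nonsing_inv _ ((Matrix.isUnit_iff_isUnit_det B).1 hB),
      Matrix.one_mulVec] at h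
    rwa [inv_mul_eq_div, le_div_iff₀ hs, mul_comm]
  calc ε * specNorm B⁻¹ ≤ ε * (sigmaMin B)⁻¹ := by gcongr
    _ < 1 := by rwa [← div_eq_mul_inv, div_lt_one hs]

/-- If `d` bounds every `|lᵢ - z|` from below, then `D - z` stretches vectors by at least `d`. -/
lemma mul_vecNorm_le_diagonal {n : ℕ} (l w : Fin n → ℂ) (z : ℂ) {d : ℝ} (hd : 0 ≤ d)
    (h : ∀ i, d ≤ ‖l i - z‖) :
    d * vecNorm w ≤ vecNorm ((Matrix.diagonal l).mulVec w - z • w) := by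
  unfold vecNorm
  refine Real.le_sqrt_of_sq_le ?_
  rw [mul_pow, Real.sq_sqrt (by positivity), Finset.mul_sum]
  refine Finset.sum_le_sum fun i _ => ?_
  have e : ((Matrix.diagonal l).mulVec w - z • w) i = (l i - z) * w i := by
    simp [Matrix.mulVec_diagonal, sub_mul]
  rw [e, norm_mul, mul_pow]
  have := h i
  gcongr

/-- The residual estimate: a vector `u` with `(A + ΔA)u = z(B + ΔB)u` is an approximate
eigenvector of `B⁻¹A` at `z`. -/
lemma vecNorm_residual_le {n : ℕ} {A B P Q : Matrix (Fin n) (Fin n) ℂ} {ε : ℝ}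
    (hB : IsUnit B) (ht : ε * specNorm B⁻¹ < 1)
    (hP : specNorm P ≤ ε) (hQ : specNorm Q ≤ ε) {z : ℂ} {u : Fin n → ℂ} (hu : u ≠ 0)
    (h : (A + P).mulVec u = z • (B + Q).mulVec u) :
    vecNorm ((B⁻¹ * A).mulVec u - z • u) ≤ ε * specNorm B⁻¹ *
      (1 + (ε * specNorm B⁻¹ + specNorm (B⁻¹ * A)) / (1 - ε * specNorm B⁻¹)) * vecNorm u := by
  have hup := vecNorm_pos hu
  have bound : ∀ R : Matrix (Fin n) (Fin n) ℂ, specNorm R ≤ ε →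
      vecNorm (B⁻¹.mulVec (R.mulVec u)) ≤ ε * specNorm B⁻¹ * vecNorm u := fun R hR => by
    have h1 := specNorm_nonneg B⁻¹
    calc vecNorm (B⁻¹.mulVec (R.mulVec u)) ≤ specNorm B⁻¹ * vecNorm (R.mulVec u) :=
          vecNorm_mulVec_le _ _
      _ ≤ specNorm B⁻¹ * (specNorm R * vecNorm u) := by
          gcongr
          exact vecNorm_mulVec_le _ _
      _ ≤ specNorm B⁻¹ * (ε * vecNorm u) := by gcongr
      _ = ε * specNorm B⁻¹ * vecNorm u := by ring
  have hE := bound P hP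
  have hF := bound Q hQ
  have hC := vecNorm_mulVec_le (B⁻¹ * A) u
  have key := congrArg B⁻¹.mulVec h
  rw [Matrix.mulVec_smul, Matrix.add_mulVec, Matrix.add_mulVec, Matrix.mulVec_add,
    Matrix.mulVec_add, Matrix.mulVec_mulVec u B⁻¹ A, Matrix.mulVec_mulVec u B⁻¹ B,
    Matrix.nonsing_inv_mul _ ((Matrix.isUnit_iff_isUnit_det B).1 hB), Matrix.one_mulVec,
    smul_add] at key
  have ht0 : 0 ≤ ε * specNorm B⁻¹ :=
    mul_nonneg ((specNorm_nonneg P).trans hP) (specNorm_nonneg _)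
  generalize ε * specNorm B⁻¹ = t at *
  generalize B⁻¹.mulVec (P.mulVec u) = e at *
  generalize B⁻¹.mulVec (Q.mulVec u) = f at *
  have hz : ‖z‖ ≤ (t + specNorm (B⁻¹ * A)) / (1 - t) := by
    have h1 : z • u = (B⁻¹ * A).mulVec u + e - z • f := by rw [key]; abel
    have h2 : ‖z‖ * vecNorm u ≤ vecNorm ((B⁻¹ * A).mulVec u) + vecNorm e + ‖z‖ * vecNorm f := by
      rw [← vecNorm_smul, ← vecNorm_smul, h1]
      exact (vecNorm_sub_le _ _).trans (by gcongr; exact vecNorm_add_le _ _)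
    have h3 : ‖z‖ * vecNorm f ≤ ‖z‖ * (t * vecNorm u) := by gcongr
    rw [le_div_iff₀ (by linarith)]
    refine le_of_mul_le_mul_right ?_ hup
    linarith
  have h1 : (B⁻¹ * A).mulVec u - z • u = z • f - e := by
    rw [eq_sub_of_add_eq key]; abel
  rw [h1]
  calc vecNorm (z • f - e) ≤ ‖z‖ * vecNorm f + vecNorm e := by
        rw [← vecNorm_smul]; exact vecNorm_sub_le _ _
    _ ≤ ‖z‖ * (t * vecNorm u) + t * vecNorm u := by gcongr
    _ = t * (1 + ‖z‖) * vecNorm u := by ring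
    _ ≤ _ := by gcongr

theorem stmt7 {n : ℕ} (hn : 1 ≤ n) (A B V : Matrix (Fin n) (Fin n) ℂ)
    (ε : ℝ) (hε : 0 < ε) (hεB : ε < sigmaMin B)
    (hV : IsUnit V) (l : Fin n → ℂ)
    (hdiag : B⁻¹ * A = V * Matrix.diagonal l * V⁻¹) :
    pseudoSpec ε A B ⊆
      ⋃ i : Fin n, Metric.closedBall (l i)
        (ε * (specNorm V * specNorm V⁻¹) * specNorm B⁻¹ *
          (1 + (ε * specNorm B⁻¹ + specNorm (B⁻¹ * A)) /
            (1 - ε * specNorm B⁻¹))) := by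
  rintro z ⟨P, Q, hP, hQ, u, hu, h⟩
  obtain ⟨hB, ht⟩ := isUnit_and_mul_specNorm_inv_lt_one B hε hεB
  have hres := vecNorm_residual_le hB ht hP hQ hu h
  have hVd := (Matrix.isUnit_iff_isUnit_det V).1 hV
  obtain ⟨w, hw⟩ : ∃ w, w = V⁻¹.mulVec u := ⟨_, rfl⟩
  have huw : u = V.mulVec w := by
    rw [hw, Matrix.mulVec_mulVec, Matrix.mul_nonsing_inv _ hVd, Matrix.one_mulVec]
  have hw0 : w ≠ 0 := by
    intro h0
    rw [h0, Matrix.mulVec_zero] at huw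
    exact hu huw
  have : Nonempty (Fin n) := ⟨⟨0, hn⟩⟩
  obtain ⟨i, hi⟩ := Finite.exists_min fun i => ‖l i - z‖
  have hlow := mul_vecNorm_le_diagonal l w z (norm_nonneg (l i - z)) hi
  have hconj : (Matrix.diagonal l).mulVec w - z • w
      = V⁻¹.mulVec ((B⁻¹ * A).mulVec u - z • u) := by
    rw [Matrix.mulVec_sub, Matrix.mulVec_smul, hdiag, Matrix.mulVec_mulVec u V⁻¹, ← Matrix.mul_assoc,
      ← Matrix.mul_assoc, Matrix.nonsing_inv_mul _ hVd, Matrix.one_mul, ← Matrix.mulVec_mulVec, ← hw]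
  rw [hconj] at hlow
  rw [Set.mem_iUnion]
  refine ⟨i, ?_⟩
  rw [Metric.mem_closedBall, dist_comm, dist_eq_norm]
  refine le_of_mul_le_mul_right ?_ (vecNorm_pos hw0)
  have hV1 := specNorm_nonneg V⁻¹
  have hfac : 0 ≤ ε * specNorm B⁻¹ *
      (1 + (ε * specNorm B⁻¹ + specNorm (B⁻¹ * A)) / (1 - ε * specNorm B⁻¹)) := by
    have h1 := specNorm_nonneg B⁻¹
    have h2 := specNorm_nonneg (B⁻¹ * A)
    have h3 : 0 < 1 - ε * specNorm B⁻¹ := by linarith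
    exact mul_nonneg (mul_nonneg hε.le h1) (add_nonneg zero_le_one
      (div_nonneg (add_nonneg (mul_nonneg hε.le h1) h2) h3.le))
  have hVw : vecNorm u ≤ specNorm V * vecNorm w :=
    (congrArg vecNorm huw).trans_le (vecNorm_mulVec_le V w)
  calc ‖l i - z‖ * vecNorm w
      ≤ specNorm V⁻¹ * vecNorm ((B⁻¹ * A).mulVec u - z • u) :=
        hlow.trans (vecNorm_mulVec_le _ _)
    _ ≤ specNorm V⁻¹ * (ε * specNorm B⁻¹ * (1 + (ε * specNorm B⁻¹ + specNorm (B⁻¹ * A)) /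
          (1 - ε * specNorm B⁻¹)) * (specNorm V * vecNorm w)) :=
        mul_le_mul_of_nonneg_left (hres.trans (mul_le_mul_of_nonneg_left hVw hfac)) hV1
    _ = _ := by ring
end

section
/- Let n ≥ k ≥ 1, let A, B be n×n complex matrices, and let U_R, U_L be n×k complex matrices with orthonormal columns (U_Rᴴ U_R = I_k and U_Lᴴ U_L = I_k). Suppose that for every u ∈ ℂᵏ, both A(U_R u) and B(U_R u) lie in the column space of U_L. Then for every ε > 0, Λ_ε(U_Lᴴ A U_R, U_Lᴴ B U_R) ⊆ Λ_ε(A,B), where the left-hand side is the ε-pseudospectrum of the k×k pencil (U_Lᴴ A U_R, U_Lᴴ B U_R). -/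
open scoped Matrix Matrix.Norms.L2Operator

theorem norm_le_one_of_orthonormal_cols {n k : ℕ} {U : Matrix (Fin n) (Fin k) ℂ}
    (hU : Uᴴ * U = 1) : ‖U‖ ≤ 1 := by
  have h := Matrix.l2_opNorm_conjTranspose_mul_self U
  have h1 : ‖(1 : Matrix (Fin k) (Fin k) ℂ)‖ ≤ 1 := by
    rw [← Matrix.diagonal_one, Matrix.l2_opNorm_diagonal]
    exact (pi_norm_le_iff_of_nonneg zero_le_one).2 fun i => by simp
  rw [hU] at h
  nlinarith [norm_nonneg U]

theorem specNorm_lift_le {n k : ℕ} {UR UL : Matrix (Fin n) (Fin k) ℂ}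
    (hUR : URᴴ * UR = 1) (hUL : ULᴴ * UL = 1) (E : Matrix (Fin k) (Fin k) ℂ) :
    specNorm (UL * E * URᴴ) ≤ specNorm E := by
  -- `specNorm` unfolds to Mathlib's `L2` operator norm.
  change ‖UL * E * URᴴ‖ ≤ ‖E‖
  have hL := norm_le_one_of_orthonormal_cols hUL
  have hR := norm_le_one_of_orthonormal_cols hUR
  rw [← Matrix.l2_opNorm_conjTranspose] at hR
  calc ‖UL * E * URᴴ‖ ≤ ‖UL * E‖ * ‖URᴴ‖ := Matrix.l2_opNorm_mul _ _
    _ ≤ ‖UL * E‖ := mul_le_of_le_one_right (norm_nonneg _) hR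
    _ ≤ ‖UL‖ * ‖E‖ := Matrix.l2_opNorm_mul _ _
    _ ≤ ‖E‖ := mul_le_of_le_one_left (norm_nonneg _) hL

theorem lift_mulVec {n k : ℕ} {UR UL : Matrix (Fin n) (Fin k) ℂ}
    (hUR : URᴴ * UR = 1) (hUL : ULᴴ * UL = 1) (M : Matrix (Fin n) (Fin n) ℂ)
    (E : Matrix (Fin k) (Fin k) ℂ) (u : Fin k → ℂ)
    (hM : ∃ w : Fin k → ℂ, M *ᵥ (UR *ᵥ u) = UL *ᵥ w) :
    (M + UL * E * URᴴ) *ᵥ (UR *ᵥ u) = UL *ᵥ ((ULᴴ * M * UR + E) *ᵥ u) := by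
  obtain ⟨w, hw⟩ := hM
  -- The coordinate vector `w` is necessarily `ULᴴ M UR u`.
  have h1 : (ULᴴ * M * UR) *ᵥ u = w := by
    rw [← Matrix.mulVec_mulVec, ← Matrix.mulVec_mulVec, hw, Matrix.mulVec_mulVec, hUL,
      Matrix.one_mulVec]
  have h2 : (UL * E * URᴴ) *ᵥ (UR *ᵥ u) = UL *ᵥ (E *ᵥ u) := by
    rw [Matrix.mulVec_mulVec, Matrix.mul_assoc, hUR, Matrix.mul_one, Matrix.mulVec_mulVec]
  rw [Matrix.add_mulVec, Matrix.add_mulVec, Matrix.mulVec_add, h1, h2, hw]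

open Matrix in
theorem stmt9 {n k : ℕ} (hk : 1 ≤ k) (hkn : k ≤ n)
    (A B : Matrix (Fin n) (Fin n) ℂ)
    (UR UL : Matrix (Fin n) (Fin k) ℂ)
    (hUR : URᴴ * UR = 1) (hUL : ULᴴ * UL = 1)
    (hAcol : ∀ u : Fin k → ℂ, ∃ w : Fin k → ℂ,
      A.mulVec (UR.mulVec u) = UL.mulVec w)
    (hBcol : ∀ u : Fin k → ℂ, ∃ w : Fin k → ℂ,
      B.mulVec (UR.mulVec u) = UL.mulVec w) :
    ∀ ε > (0 : ℝ), pseudoSpec ε (ULᴴ * A * UR) (ULᴴ * B * UR) ⊆ pseudoSpec ε A B := by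
  intro ε _ z hz
  obtain ⟨ΔA, ΔB, hA, hB, u, hu, h⟩ := hz
  refine ⟨UL * ΔA * URᴴ, UL * ΔB * URᴴ, (specNorm_lift_le hUR hUL ΔA).trans hA,
    (specNorm_lift_le hUR hUL ΔB).trans hB, UR *ᵥ u, fun h0 => hu ?_, ?_⟩
  · -- `UR` has the left inverse `URᴴ`, so it is injective.
    have h1 := congrArg (fun v => URᴴ *ᵥ v) h0
    simpa [mulVec_mulVec, hUR] using h1
  · rw [lift_mulVec hUR hUL A ΔA u (hAcol u), lift_mulVec hUR hUL B ΔB u (hBcol u), h,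
      mulVec_smul]
end

section
/- Let n ≥ 1, let A, B, R be n×n complex matrices, and let Q be a unitary 2n×2n complex matrix with n×n blocks Q₁₁, Q₁₂, Q₂₁, Q₂₂ (so Q = [[Q₁₁, Q₁₂],[Q₂₁, Q₂₂]]). Suppose B = Q₁₁R and −A = Q₂₁R, and suppose A and Q₁₂ᴴA are invertible. Then Q₁₂ᴴB = Q₂₂ᴴA and (Q₁₂ᴴA)⁻¹(Q₂₂ᴴB) = (A⁻¹B)². -/
open Matrix in
theorem stmt11 {n : ℕ} (hn : 1 ≤ n)
    (A B R Q11 Q12 Q21 Q22 : Matrix (Fin n) (Fin n) ℂ)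
    (hQ : (Matrix.fromBlocks Q11 Q12 Q21 Q22)ᴴ * Matrix.fromBlocks Q11 Q12 Q21 Q22 = 1)
    (hB : B = Q11 * R) (hA : -A = Q21 * R)
    (hAinv : IsUnit A) (hQA : IsUnit (Q12ᴴ * A)) :
    Q12ᴴ * B = Q22ᴴ * A ∧ (Q12ᴴ * A)⁻¹ * (Q22ᴴ * B) = (A⁻¹ * B) ^ 2 := by
  -- The (2,1) block of `Qᴴ Q = 1`; multiplying it by `R` on the right gives the first claim.
  have h21 : Q12ᴴ * Q11 + Q22ᴴ * Q21 = 0 := by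
    rw [fromBlocks_conjTranspose, fromBlocks_multiply, ← fromBlocks_one, fromBlocks_inj] at hQ
    exact hQ.2.2.1
  have h1 : Q12ᴴ * B = Q22ᴴ * A := by
    have h := congrArg (· * R) h21
    simp only [add_mul, mul_assoc, ← hB, ← hA, zero_mul, mul_neg] at h
    exact add_neg_eq_zero.mp h
  refine ⟨h1, ?_⟩
  have hdetA : IsUnit A.det := (isUnit_iff_isUnit_det A).mp hAinv
  have hdetQA : IsUnit (Q12ᴴ * A).det := (isUnit_iff_isUnit_det _).mp hQA
  have h2 : Q22ᴴ * B = Q12ᴴ * A * (A⁻¹ * B) ^ 2 := by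
    calc Q22ᴴ * B = Q22ᴴ * (A * (A⁻¹ * B)) := by rw [mul_nonsing_inv_cancel_left _ _ hdetA]
      _ = Q12ᴴ * B * (A⁻¹ * B) := by rw [← mul_assoc, h1]
      _ = Q12ᴴ * (A * (A⁻¹ * B)) * (A⁻¹ * B) := by rw [mul_nonsing_inv_cancel_left _ _ hdetA]
      _ = Q12ᴴ * A * (A⁻¹ * B) ^ 2 := by simp only [pow_two, mul_assoc]
  rw [h2, nonsing_inv_mul_cancel_left _ _ hdetQA]
end

section
/- Let n ≥ 1 and p ≥ 0, and let (A_j)_{0≤j≤p} and (B_j)_{0≤j≤p} be n×n complex matrices with A₀ = A, B₀ = B. Suppose that for each 0 ≤ j < p there exist a unitary 2n×2n complex matrix Q⁽ʲ⁾ with n×n blocks Q₁₁⁽ʲ⁾, Q₁₂⁽ʲ⁾, Q₂₁⁽ʲ⁾, Q₂₂⁽ʲ⁾ and an n×n complex matrix R_j such that B_j = Q₁₁⁽ʲ⁾R_j, −A_j = Q₂₁⁽ʲ⁾R_j, A_{j+1} = (Q₁₂⁽ʲ⁾)ᴴA_j and B_{j+1} = (Q₂₂⁽ʲ⁾)ᴴB_j.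 If A_j is invertible for every 0 ≤ j ≤ p, then A_p⁻¹B_p = (A⁻¹B)^{2^p}. If moreover A_p + B_p is invertible, then (A_p + B_p)⁻¹A_p = (I + (A⁻¹B)^{2^p})⁻¹. -/
/-!
Write `X = A⁻¹B` for the current pair. The off-diagonal block of `QᴴQ = 1`, multiplied on the right
by `R`, says `Q₁₂ᴴ B = Q₂₂ᴴ A`. Hence `Q₂₂ᴴ B = Q₂₂ᴴ A X = Q₁₂ᴴ B X = Q₁₂ᴴ A X²`, i.e. the next
pair satisfies `B' = A' X²`: one step squares `A⁻¹B`, and induction gives the power `2 ^ p`.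
The second claim follows by factoring `A_p + B_p = A_p (1 + X ^ (2 ^ p))`.
-/

open Matrix in
/-- One step of the iteration squares `X = A⁻¹B`, with the relation kept in the inverse-free form
`B = A X`. -/
lemma irs_step {n : ℕ} {A B X Q11 Q12 Q21 Q22 R : Matrix (Fin n) (Fin n) ℂ}
    (hQ : (Matrix.fromBlocks Q11 Q12 Q21 Q22)ᴴ * Matrix.fromBlocks Q11 Q12 Q21 Q22 = 1)
    (hB : B = Q11 * R) (hA : -A = Q21 * R) (hX : B = A * X) :
    Q22ᴴ * B = Q12ᴴ * A * X ^ 2 := by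
  rw [fromBlocks_conjTranspose, fromBlocks_multiply, ← fromBlocks_one, fromBlocks_inj] at hQ
  have hoff : Q12ᴴ * Q11 + Q22ᴴ * Q21 = 0 := hQ.2.2.1
  have key : Q12ᴴ * B = Q22ᴴ * A := by
    have h := congrArg (· * R) hoff
    simp only [add_mul, zero_mul, Matrix.mul_assoc, ← hB, ← hA, Matrix.mul_neg] at h
    exact add_neg_eq_zero.mp h
  calc Q22ᴴ * B = Q22ᴴ * A * X := by rw [hX, Matrix.mul_assoc]
    _ = Q12ᴴ * B * X := by rw [key]
    _ = Q12ᴴ * A * X ^ 2 := by rw [hX, pow_two]; simp only [Matrix.mul_assoc]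

open Matrix in
theorem stmt12 {n p : ℕ} (hn : 1 ≤ n)
    (A B : ℕ → Matrix (Fin n) (Fin n) ℂ)
    (hstep : ∀ j < p, ∃ Q11 Q12 Q21 Q22 R : Matrix (Fin n) (Fin n) ℂ,
      (Matrix.fromBlocks Q11 Q12 Q21 Q22)ᴴ * Matrix.fromBlocks Q11 Q12 Q21 Q22 = 1 ∧
      B j = Q11 * R ∧ -(A j) = Q21 * R ∧
      A (j + 1) = Q12ᴴ * A j ∧ B (j + 1) = Q22ᴴ * B j)
    (hinv : ∀ j ≤ p, IsUnit (A j)) :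
    (A p)⁻¹ * B p = ((A 0)⁻¹ * B 0) ^ (2 ^ p) ∧
    (IsUnit (A p + B p) →
      (A p + B p)⁻¹ * A p = (1 + ((A 0)⁻¹ * B 0) ^ (2 ^ p))⁻¹) := by
  have hdet : ∀ j ≤ p, IsUnit (A j).det := fun j hj => (isUnit_iff_isUnit_det _).mp (hinv j hj)
  have hmain : ∀ j ≤ p, B j = A j * ((A 0)⁻¹ * B 0) ^ (2 ^ j) := by
    intro j
    induction j with
    | zero =>
      intro hj
      rw [pow_zero, pow_one, mul_nonsing_inv_cancel_left _ _ (hdet 0 hj)]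
    | succ j ih =>
      intro hj
      obtain ⟨Q11, Q12, Q21, Q22, R, hQ, hB, hA, hA', hB'⟩ := hstep j hj
      rw [hA', hB', irs_step hQ hB hA (ih (Nat.le_of_succ_le hj)), ← pow_mul, ← pow_succ]
  have hp := hmain p le_rfl
  refine ⟨?_, fun _ => ?_⟩
  · rw [hp, nonsing_inv_mul_cancel_left _ _ (hdet p le_rfl)]
  · have hfac : A p + B p = A p * (1 + ((A 0)⁻¹ * B 0) ^ (2 ^ p)) := by
      rw [mul_add, mul_one, ← hp]
    rw [hfac, Matrix.mul_inv_rev, nonsing_inv_mul_cancel_right _ _ (hdet p le_rfl)]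
end

section
/- Let n ≥ 1, let A, B be n×n complex matrices, let h ∈ ℝ, and set 𝒜 = A − (h−1)B and ℬ = A − (h+1)B. Let ε' > 0 and suppose z ∈ Λ_{ε'}(𝒜, ℬ) with z ≠ 1. Then S(z) := ((h+1)z − (h−1))/(z − 1) belongs to Λ_{ε''}(A,B), where ε'' = max{ε', (ε'/2)(|h+1| + |h−1|)}. -/
theorem specNorm_combo_le {n : ℕ} (a b : ℂ) (E F : Matrix (Fin n) (Fin n) ℂ) {ε : ℝ}
    (hE : specNorm E ≤ ε) (hF : specNorm F ≤ ε) :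
    specNorm (a • E - b • F) ≤ ε * (‖a‖ + ‖b‖) := by
  unfold specNorm at *
  rw [map_sub, map_smul, map_smul, map_sub, map_smul, map_smul]
  refine (norm_sub_le _ _).trans ?_
  rw [norm_smul, norm_smul, mul_add, mul_comm ε, mul_comm ε]
  gcongr

theorem stmt13 {n : ℕ} (hn : 1 ≤ n) (A B : Matrix (Fin n) (Fin n) ℂ)
    (h : ℝ) (ε' : ℝ) (hε' : 0 < ε') (z : ℂ) (hz : z ≠ 1)
    (hzin : z ∈ pseudoSpec ε' (A - ((h : ℂ) - 1) • B) (A - ((h : ℂ) + 1) • B)) :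
    (((h : ℂ) + 1) * z - ((h : ℂ) - 1)) / (z - 1) ∈
      pseudoSpec (max ε' (ε' / 2 * (|h + 1| + |h - 1|))) A B := by
  obtain ⟨E, F, hE, hF, u, hu, heq⟩ := hzin
  refine ⟨(((h : ℂ) + 1) / 2) • E - (((h : ℂ) - 1) / 2) • F,
    (1 / 2 : ℂ) • E - (1 / 2 : ℂ) • F, ?_, ?_, u, hu, ?_⟩
  · refine (specNorm_combo_le _ _ E F hE hF).trans (le_trans (le_of_eq ?_) (le_max_right _ _))
    have h1 : ‖((h : ℂ) + 1) / 2‖ = |h + 1| / 2 := by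
      rw [norm_div, ← Complex.ofReal_one, ← Complex.ofReal_add, Complex.norm_real]
      simp
    have h2 : ‖((h : ℂ) - 1) / 2‖ = |h - 1| / 2 := by
      rw [norm_div, ← Complex.ofReal_one, ← Complex.ofReal_sub, Complex.norm_real]
      simp
    rw [h1, h2]
    ring
  · refine (specNorm_combo_le _ _ E F hE hF).trans (le_trans (le_of_eq ?_) (le_max_left _ _))
    norm_num
  · have hz' : z - 1 ≠ 0 := sub_ne_zero.mpr hz
    funext i
    have hi := congrFun heq i
    simp only [Matrix.add_mulVec, Matrix.sub_mulVec, Matrix.smul_mulVec, Pi.add_apply,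
      Pi.sub_apply, Pi.smul_apply, smul_eq_mul] at hi ⊢
    rw [div_mul_eq_mul_div (((h : ℂ) + 1) * z - ((h : ℂ) - 1)), eq_div_iff hz']
    -- Clearing `z - 1` leaves the negative of the `i`-th coordinate of the eigenvalue equation.
    linear_combination -hi
end

section
/- Let ξ ∈ ℝ with 2 ≤ ξ ≤ 3, and let m, m₁, m₂ be nonnegative real numbers with m₁ + m₂ = m and m/5 ≤ m₁ ≤ 4m/5. Then m₁^ξ + m₂^ξ ≤ (17/25) m^ξ. -/
/-- Splitting off the square and bounding the remaining factor `x ^ (ξ - 2)` by monotonicity. -/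
lemma rpow_le_sq_mul {ξ x m : ℝ} (hξ : 2 ≤ ξ) (hx : 0 ≤ x) (hxm : x ≤ m) :
    x ^ ξ ≤ m ^ (ξ - 2) * x ^ 2 := by
  have h : x ^ ξ = x ^ (ξ - 2) * x ^ 2 := by
    rw [← Real.rpow_two, ← Real.rpow_add_of_nonneg hx (by linarith) (by norm_num)]
    congr 1
    ring
  rw [h]
  exact mul_le_mul_of_nonneg_right (Real.rpow_le_rpow hx hxm (by linarith)) (sq_nonneg x)

-- Since `mᵢ ≤ m`, pulling out `m ^ (ξ - 2)` reduces the claim to the case `ξ = 2`, which is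
-- `(m₁ - m / 5) * (4 * m / 5 - m₁) ≥ 0`.
theorem stmt17 (ξ : ℝ) (hξ1 : 2 ≤ ξ) (hξ2 : ξ ≤ 3)
    (m m₁ m₂ : ℝ) (hm : 0 ≤ m) (hm1 : 0 ≤ m₁) (hm2 : 0 ≤ m₂)
    (hsum : m₁ + m₂ = m) (hlo : m / 5 ≤ m₁) (hhi : m₁ ≤ 4 * m / 5) :
    m₁ ^ ξ + m₂ ^ ξ ≤ (17 / 25) * m ^ ξ := by
  have h1 := rpow_le_sq_mul hξ1 hm1 (show m₁ ≤ m by linarith)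
  have h2 := rpow_le_sq_mul hξ1 hm2 (show m₂ ≤ m by linarith)
  have h : m ^ ξ = m ^ (ξ - 2) * m ^ 2 := by
    rw [← Real.rpow_two, ← Real.rpow_add_of_nonneg hm (by linarith) (by norm_num)]
    congr 1
    ring
  have hsq : m₁ ^ 2 + m₂ ^ 2 ≤ 17 / 25 * m ^ 2 := by
    obtain rfl : m₂ = m - m₁ := by linarith
    nlinarith [mul_nonneg (sub_nonneg.2 hlo) (sub_nonneg.2 hhi)]
  have h3 := mul_le_mul_of_nonneg_left hsq (Real.rpow_nonneg hm (ξ - 2))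
  rw [h]
  linarith
end

section
/- Let n ≥ 1 and let V be an invertible n×n complex matrix each of whose columns v₁, …, vₙ has Euclidean norm 1. Let w₁ᴴ, …, wₙᴴ denote the rows of V⁻¹. Then ‖V‖₂ · ‖V⁻¹‖₂ ≤ √( n · Σᵢ ‖wᵢ‖² ) = √( n · Σᵢ (‖vᵢ‖ ‖wᵢ‖)² ). -/
lemma vecNorm_sq {n : ℕ} (v : Fin n → ℂ) : vecNorm v ^ 2 = ∑ i, ‖v i‖ ^ 2 :=
  Real.sq_sqrt (Finset.sum_nonneg fun _ _ => sq_nonneg _)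

/-- The spectral norm is at most the Frobenius norm, here summed by rows. -/
lemma specNorm_le_sqrt_sum_rows {n : ℕ} (M : Matrix (Fin n) (Fin n) ℂ) :
    specNorm M ≤ Real.sqrt (∑ i, vecNorm (fun j => M i j) ^ 2) := by
  refine ContinuousLinearMap.opNorm_le_bound _ (Real.sqrt_nonneg _) fun x => ?_
  rw [EuclideanSpace.norm_eq, EuclideanSpace.norm_eq, ← Real.sqrt_mul
    (Finset.sum_nonneg fun _ _ => sq_nonneg _), Finset.sum_mul]
  refine Real.sqrt_le_sqrt (Finset.sum_le_sum fun i _ => ?_)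
  rw [vecNorm_sq]
  have hcoord : (LinearMap.toContinuousLinearMap (Matrix.toEuclideanLin M) x) i
      = ∑ j, M i j * x j := rfl
  rw [hcoord]
  calc ‖∑ j, M i j * x j‖ ^ 2 ≤ (∑ j, ‖M i j‖ * ‖x j‖) ^ 2 := by
        gcongr
        simpa only [norm_mul] using norm_sum_le Finset.univ fun j => M i j * x j
    _ ≤ (∑ j, ‖M i j‖ ^ 2) * ∑ j, ‖x j‖ ^ 2 :=
        Finset.sum_mul_sq_le_sq_mul_sq _ _ _

theorem stmt18 {n : ℕ} (hn : 1 ≤ n) (V : Matrix (Fin n) (Fin n) ℂ)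
    (hV : IsUnit V)
    (hcols : ∀ i : Fin n, vecNorm (fun j => V j i) = 1) :
    specNorm V * specNorm V⁻¹ ≤
      Real.sqrt (n * ∑ i : Fin n, vecNorm (fun j => V⁻¹ i j) ^ 2) ∧
    Real.sqrt (n * ∑ i : Fin n, vecNorm (fun j => V⁻¹ i j) ^ 2) =
      Real.sqrt (n * ∑ i : Fin n,
        (vecNorm (fun j => V j i) * vecNorm (fun j => V⁻¹ i j)) ^ 2) := by
  refine ⟨?_, by simp only [hcols, one_mul]⟩
  have hfrob : ∑ i, vecNorm (fun j => V i j) ^ 2 = (n : ℝ) := by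
    calc ∑ i, vecNorm (fun j => V i j) ^ 2 = ∑ i, vecNorm (fun j => V j i) ^ 2 := by
          simp only [vecNorm_sq]
          exact Finset.sum_comm
      _ = n := by simp [hcols]
  rw [Real.sqrt_mul n.cast_nonneg]
  refine mul_le_mul ?_ (specNorm_le_sqrt_sum_rows _) (norm_nonneg _) (Real.sqrt_nonneg _)
  rw [← hfrob]
  exact specNorm_le_sqrt_sum_rows V
end
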